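/- Let g_1, g_2 be binary morphisms on X = {a,b} with g_1(a) = a^s, |g_1(b)|_b = p, g_2(a) = a^t, |g_2(b)|_b = q, where g_1(b) = a^{γ_1} b a^{α_1} ⋯ b a^{α_{p-1}} b a^{γ_2}, g_2(b) = a^{δ_1} b a^{β_1} ⋯ b a^{β_{q-1}} b a^{δ_2}, s,t ≥ 1, p,q ≥ 2, all exponents nonnegative. Assume p = r^m and q = r^n for positive integers m, n, r. Then g_1 g_2 = g_2 g_1 if and only if at least one of: (i) g_1^n = g_2^m; (ii) g_1(b) and g_2(b) are both powers of b; (iii) g_1(a) = g_2(a) = a and g_1^n(b) and g_2^m(b) are a-conjugates. -/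

import Mathlib

/-- Words over the binary alphabet: `false` is the letter `a`, `true` is the letter `b`. -/
abbrev Word := List Bool

/-- The morphism of the free monoid determined by the images `g` of the letters. -/
def applyG (g : Bool → Word) (w : Word) : Word := w.flatMap g

/-- `a^n`. -/
def rep (n : ℕ) : Word := List.replicate n false

/-- `b a^{α 1} b a^{α 2} ⋯ b a^{α (p-1)} b`, a word with `p` occurrences of `b`. -/
def blockWord (p : ℕ) (α : ℕ → ℕ) : Word :=
  ((List.range (p - 1)).flatMap fun i => true :: rep (α (i + 1))) ++ [true]

/-- `w^k`. -/
def wordPow (w : Word) (k : ℕ) : Word := (List.replicate k w).flatten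

/-- `u` and `v` are `a`-conjugates. -/
def AConj (u v : Word) : Prop :=
  ∃ p q r s : ℕ, ∃ w : Word,
    u = rep p ++ w ++ rep q ∧ v = rep r ++ w ++ rep s ∧ p + q = r + s

/-- `w` is the infinite word `ω(g)`: for every `n`, the word obtained from `g^n(b)` by deleting
all occurrences of `a` preceding the first occurrence of `b` is a prefix of `w`. -/
def IsOmega (g : Bool → Word) (w : ℕ → Bool) : Prop :=
  ∀ n k : ℕ, ∀ hk : k < (((applyG g)^[n] [true]).dropWhile (fun x => !x)).length,
    (((applyG g)^[n] [true]).dropWhile (fun x => !x)).get ⟨k, hk⟩ = w k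

/-- `Aw w i` (for `i ≥ 1`): the number of occurrences of `a` in `w` strictly between the
`i`-th and `(i+1)`-th occurrences of `b` in `w`. -/
noncomputable def Aw (w : ℕ → Bool) (i : ℕ) : ℕ :=
  Nat.nth (fun n => w n = true) i - Nat.nth (fun n => w n = true) (i - 1) - 1

def Phi (s D p : ℕ) (α x : ℕ → ℕ) : ℕ → ℕ := fun j =>
  if p ∣ j then D + s * x (j / p) else α (j % p)

def An (s γ : ℕ) : ℕ → ℕ
  | 0 => 0
  | n + 1 => s * An s γ n + γ

def enc (A k : ℕ) (c : ℕ → ℕ) (B : ℕ) : Word := rep A ++ blockWord k c ++ rep B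

lemma An_add (s γ δ n : ℕ) : An s γ n + An s δ n = An s (γ + δ) n := by
  induction n with
  | zero => rfl
  | succ n ih => simp only [An, ← ih]; ring

lemma An_closed (s γ n : ℕ) : ((s : ℤ) - 1) * An s γ n = ((s : ℤ) ^ n - 1) * γ := by
  induction n with
  | zero => simp [An]
  | succ n ih => simp only [An]; push_cast; rw [pow_succ]; linear_combination (s : ℤ) * ih

lemma Phi_comp (s D p : ℕ) (hp : 0 < p) (α : ℕ → ℕ) (s' D' p' : ℕ) (c x : ℕ → ℕ) :
    Phi s D p α (Phi s' D' p' c x) = Phi (s * s') (s * D' + D) (p * p') (Phi s D p α c) x := by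
  funext j
  simp only [Phi]
  by_cases h : p ∣ j
  · obtain ⟨i, rfl⟩ := h
    have e1 : p * i / p = i := Nat.mul_div_cancel_left i hp
    by_cases h' : p' ∣ i
    · rw [if_pos (Dvd.intro _ rfl), e1, if_pos h', if_pos (Nat.mul_dvd_mul_left p h'),
        Nat.mul_div_mul_left _ _ hp]
      ring
    · rw [if_pos (Dvd.intro _ rfl), e1, if_neg h', if_neg, Nat.mul_mod_mul_left,
        if_pos (Dvd.intro _ rfl), Nat.mul_div_cancel_left _ hp]
      rwa [Nat.mul_dvd_mul_iff_left hp]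
  · have h2 : ¬ p * p' ∣ j := fun h3 => h (dvd_trans (Dvd.intro _ rfl) h3)
    have h4 : ¬ p ∣ j % (p * p') := by
      rwa [Nat.dvd_mod_iff (Dvd.intro _ rfl)]
    rw [if_neg h, if_neg h2, if_neg h4, Nat.mod_mul_right_mod]

lemma Phi_congr (s D p : ℕ) (hp : 0 < p) (c c' x : ℕ → ℕ) (h : ∀ j, 0 < j → j < p → c j = c' j) :
    Phi s D p c x = Phi s D p c' x := by
  funext j
  simp only [Phi]
  split_ifs with hj
  · rfl
  · exact h _ (Nat.pos_of_ne_zero fun h0 => hj (Nat.dvd_of_mod_eq_zero h0)) (Nat.mod_lt _ hp)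

lemma Phi_iter (s D p : ℕ) (hp : 0 < p) (α c0 x : ℕ → ℕ) (n : ℕ) :
    (Phi s D p α)^[n] x = Phi (s ^ n) (An s D n) (p ^ n) ((Phi s D p α)^[n] c0) x := by
  induction n with
  | zero => funext j; simp [Phi, An]
  | succ n ih =>
    rw [Function.iterate_succ_apply', ih, Phi_comp _ _ _ hp, Function.iterate_succ_apply', An,
      pow_succ', pow_succ']

lemma Phi_small (s D p : ℕ) (c x : ℕ → ℕ) (j : ℕ) (h0 : 0 < j) (h : j < p) :
    Phi s D p c x j = c j := by
  simp only [Phi]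
  rw [if_neg (Nat.not_dvd_of_pos_of_lt h0 h), Nat.mod_eq_of_lt h]

lemma Phi_local (s D p k : ℕ) (hp : 0 < p) (α x y : ℕ → ℕ) (h : ∀ j, 0 < j → j < k → x j = y j) :
    ∀ j, 0 < j → j < p * k → Phi s D p α x j = Phi s D p α y j := by
  intro j h0 hj
  simp only [Phi]
  split_ifs with hd
  · obtain ⟨i, rfl⟩ := hd
    rw [Nat.mul_div_cancel_left _ hp]
    rw [h i (Nat.pos_of_mul_pos_left h0) (Nat.lt_of_mul_lt_mul_left hj)]
  · rfl

lemma Phi_iter_local (s D p : ℕ) (hp : 0 < p) (α x y : ℕ → ℕ) (n : ℕ) :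
    ∀ j, 0 < j → j < p ^ n → (Phi s D p α)^[n] x j = (Phi s D p α)^[n] y j := by
  induction n with
  | zero => intro j h0 hj; simp at hj; omega
  | succ n ih =>
    rw [Function.iterate_succ_apply', Function.iterate_succ_apply', pow_succ']
    exact Phi_local _ _ _ _ hp _ _ _ ih

lemma Phi_main (s D p t E q : ℕ) (hp : 2 ≤ p) (hq : 2 ≤ q) (α β : ℕ → ℕ) (m n : ℕ) (hn : 0 < n)
    (h : (Phi s D p α)^[n] = (Phi t E q β)^[m]) (j : ℕ) (h0 : 0 < j) (hj : j < p * q) :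
    Phi s D p α β j = Phi t E q β α j := by
  set f := Phi s D p α with hf
  set g := Phi t E q β with hg
  have hp0 : 0 < p := by omega
  have hq0 : 0 < q := by omega
  set N := p * q with hN
  have cf : Function.Commute f ((f^[n])^[N]) := by
    exact ((Function.Commute.refl f).iterate_right n).iterate_right N
  have cg : Function.Commute g ((f^[n])^[N]) := by
    rw [h]; exact ((Function.Commute.refl g).iterate_right m).iterate_right N
  have hjN : j < p ^ (n * N) := by
    calc j < N := hj
      _ < 2 ^ N := Nat.lt_two_pow_self
      _ ≤ p ^ N := Nat.pow_le_pow_left hp N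
      _ ≤ p ^ (n * N) := Nat.pow_le_pow_right hp0 (Nat.le_mul_of_pos_left N hn)
  have loc : ∀ x y, (f^[n])^[N] x j = (f^[n])^[N] y j := by
    intro x y
    rw [← Function.iterate_mul]
    exact Phi_iter_local s D p hp0 α x y _ j h0 hjN
  set x : ℕ → ℕ := fun _ => 0
  have e1 : f β j = f (g ((f^[n])^[N] x)) j := by
    apply Phi_local _ _ _ q hp0 _ _ _ _ j h0 hj
    intro i hi0 hi
    rw [hg, Phi_small _ _ _ _ _ _ hi0 hi]
  have e2 : g α j = g (f ((f^[n])^[N] x)) j := by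
    apply Phi_local _ _ _ p hq0 _ _ _ _ j h0 (by rw [mul_comm]; exact hj)
    intro i hi0 hi
    rw [hf, Phi_small _ _ _ _ _ _ hi0 hi]
  rw [e1, e2, cg.eq, cf.eq, cf.eq, cg.eq]
  exact loc _ _

lemma rep_add (a b : ℕ) : rep (a + b) = rep a ++ rep b := by
  simp [rep, List.replicate_append_replicate]

lemma bw_one (c : ℕ → ℕ) : blockWord 1 c = [true] := by simp [blockWord]

lemma bw_succ (k : ℕ) (hk : 0 < k) (c : ℕ → ℕ) :
    blockWord (k + 1) c = true :: (rep (c 1) ++ blockWord k (fun j => c (j + 1))) := by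
  obtain ⟨k, rfl⟩ : ∃ l, k = l + 1 := ⟨k - 1, by omega⟩
  simp [blockWord, List.range_succ_eq_map, List.flatMap_map]

lemma bw_congr (k : ℕ) (c c' : ℕ → ℕ) (h : ∀ j, 0 < j → j < k → c j = c' j) :
    blockWord k c = blockWord k c' := by
  unfold blockWord
  congr 1
  apply List.flatMap_congr
  intro i hi
  rw [List.mem_range] at hi
  rw [h (i + 1) (by omega) (by omega)]

lemma bw_cons (k : ℕ) (c : ℕ → ℕ) : ∃ w, blockWord k c = true :: w := by
  rcases Nat.lt_or_ge 1 k with h | h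
  · obtain ⟨l, rfl⟩ : ∃ l, k = l + 1 := ⟨k - 1, by omega⟩
    exact ⟨_, bw_succ l (by omega) c⟩
  · refine ⟨[], ?_⟩
    have : k - 1 = 0 := by omega
    simp [blockWord, this]

lemma bw_append (k l : ℕ) (hk : 0 < k) (hl : 0 < l) (x : ℕ → ℕ) :
    blockWord k x ++ (rep (x k) ++ blockWord l (fun j => x (k + j))) = blockWord (k + l) x := by
  induction k generalizing x with
  | zero => omega
  | succ k ih =>
    rcases Nat.eq_zero_or_pos k with rfl | hk'
    · rw [bw_one, Nat.zero_add, add_comm 1 l, bw_succ l hl]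
      simp [add_comm]
    · rw [bw_succ k hk', show k + 1 + l = (k + l) + 1 by ring, bw_succ (k + l) (by omega), ← ih hk']
      simp only [List.cons_append, List.append_assoc]
      simp only [show ∀ j, k + 1 + j = k + j + 1 by intro j; ring]

lemma rep_cancel (a b : ℕ) (u v : Word) (h : rep a ++ true :: u = rep b ++ true :: v) :
    a = b ∧ u = v := by
  induction a generalizing b with
  | zero =>
    cases b with
    | zero => simpa [rep] using h
    | succ b => simp [rep, List.replicate_succ] at h
  | succ a ih =>
    cases b with
    | zero => simp [rep, List.replicate_succ] at h
    | succ b =>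
      have := ih b (by simpa [rep, List.replicate_succ] using h)
      exact ⟨congrArg (· + 1) this.1, this.2⟩

lemma bw_inj (k : ℕ) (c c' : ℕ → ℕ) (h : blockWord k c = blockWord k c') :
    ∀ j, 0 < j → j < k → c j = c' j := by
  induction k generalizing c c' with
  | zero => intro j; omega
  | succ k ih =>
    intro j h0 hj
    have hk : 0 < k := by omega
    rw [bw_succ k hk, bw_succ k hk] at h
    simp only [List.cons.injEq, true_and] at h
    obtain ⟨w, hw⟩ := bw_cons k (fun j => c (j + 1))
    obtain ⟨w', hw'⟩ := bw_cons k (fun j => c' (j + 1))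
    have h1 : c 1 = c' 1 := by
      rw [hw, hw'] at h
      exact (rep_cancel _ _ _ _ h).1
    rw [h1] at h
    have h2 := ih _ _ (List.append_cancel_left h)
    obtain ⟨i, rfl⟩ : ∃ l, j = l + 1 := ⟨j - 1, by omega⟩
    rcases Nat.eq_zero_or_pos i with rfl | hi
    · exact h1
    · exact h2 i hi (by omega)

def trim (w : Word) : Word := (w.dropWhile (fun x => !x)).rdropWhile (fun x => !x)

lemma dw_rep (p : ℕ) (w : Word) : (rep p ++ w).dropWhile (fun x => !x) = w.dropWhile (fun x => !x) := by
  induction p with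
  | zero => simp [rep]
  | succ p ih => simpa [rep, List.replicate_succ] using ih

lemma rdw_rep (p : ℕ) (w : Word) :
    (w ++ rep p).rdropWhile (fun x => !x) = w.rdropWhile (fun x => !x) := by
  have h := dw_rep p w.reverse
  simp only [List.rdropWhile, List.reverse_append]
  rw [← h]; simp [rep]

lemma trim_rep (p q : ℕ) (w : Word) : trim (rep p ++ w ++ rep q) = trim w := by
  unfold trim
  rw [List.append_assoc, dw_rep, List.dropWhile_append]
  split_ifs with h
  · have := dw_rep q []
    rw [List.append_nil] at this
    rw [this, List.isEmpty_iff.mp h]; rfl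
  · rw [rdw_rep]

lemma trim_bw (k : ℕ) (c : ℕ → ℕ) : trim (blockWord k c) = blockWord k c := by
  unfold trim
  obtain ⟨w, hw⟩ := bw_cons k c
  have : (blockWord k c).dropWhile (fun x => !x) = blockWord k c := by rw [hw]; simp
  rw [this]
  unfold blockWord
  rw [List.rdropWhile_concat]; simp

lemma trim_enc (A k : ℕ) (c : ℕ → ℕ) (B : ℕ) : trim (enc A k c B) = blockWord k c := by
  rw [enc, trim_rep, trim_bw]

lemma enc_inj (A k : ℕ) (c : ℕ → ℕ) (B A' : ℕ) (c' : ℕ → ℕ) (B' : ℕ)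
    (h : enc A k c B = enc A' k c' B') :
    A = A' ∧ B = B' ∧ ∀ j, 0 < j → j < k → c j = c' j := by
  have hb : blockWord k c = blockWord k c' := by
    rw [← trim_enc A k c B, h, trim_enc]
  have hA : A = A' := by
    obtain ⟨w, hw⟩ := bw_cons k c
    have h' := h
    rw [enc, enc, ← hb, hw] at h'
    simp only [List.append_assoc, List.cons_append] at h'
    exact (rep_cancel _ _ _ _ h').1
  refine ⟨hA, ?_, bw_inj _ _ _ hb⟩
  have hl := congrArg List.length h
  simp [enc, hb, rep] at hl
  omega

lemma applyG_append (g : Bool → Word) (u v : Word) :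
    applyG g (u ++ v) = applyG g u ++ applyG g v := by simp [applyG]

lemma applyG_rep (g : Bool → Word) (s : ℕ) (h : g false = rep s) (n : ℕ) :
    applyG g (rep n) = rep (s * n) := by
  induction n with
  | zero => simp [rep, applyG]
  | succ n ih =>
    rw [rep_add, applyG_append, ih, mul_add, rep_add]
    simp [rep, applyG, h]

lemma applyG_bw (g : Bool → Word) (s γ₁ p : ℕ) (α : ℕ → ℕ) (γ₂ : ℕ) (hp : 0 < p)
    (ha : g false = rep s) (hb : g true = enc γ₁ p α γ₂) (k : ℕ) (hk : 0 < k) (c : ℕ → ℕ) :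
    applyG g (blockWord k c) = enc γ₁ (p * k) (Phi s (γ₁ + γ₂) p α c) γ₂ := by
  induction k generalizing c with
  | zero => omega
  | succ k ih =>
    have h1 : blockWord p α = blockWord p (Phi s (γ₁ + γ₂) p α c) :=
      bw_congr _ _ _ fun j h0 hj => (Phi_small _ _ _ _ _ _ h0 hj).symm
    rcases Nat.eq_zero_or_pos k with rfl | hk'
    · rw [bw_one]
      simp only [applyG, List.flatMap_singleton, zero_add, mul_one]
      rw [hb, enc, enc, h1]
    · have e : true :: (rep (c 1) ++ blockWord k (fun j => c (j + 1)))
          = [true] ++ (rep (c 1) ++ blockWord k (fun j => c (j + 1))) := rfl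
      have e2 : applyG g [true] = enc γ₁ p α γ₂ := by simp [applyG, hb]
      rw [bw_succ k hk', e, applyG_append, applyG_append, e2, ih hk', applyG_rep g s ha,
        mul_add, mul_one, add_comm (p * k) p]
      simp only [enc]
      rw [← bw_append p (p * k) hp (Nat.mul_pos hp hk'), h1]
      have e3 : Phi s (γ₁ + γ₂) p α c p = γ₂ + s * c 1 + γ₁ := by
        simp [Phi, Nat.div_self hp]; ring
      have e4 : (fun j => Phi s (γ₁ + γ₂) p α c (p + j))
          = Phi s (γ₁ + γ₂) p α (fun j => c (j + 1)) := by
        funext j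
        simp [Phi, Nat.add_div_left _ hp]
      rw [e3, e4, rep_add, rep_add]
      simp only [List.append_assoc]

lemma applyG_enc (g : Bool → Word) (s γ₁ p : ℕ) (α : ℕ → ℕ) (γ₂ : ℕ) (hp : 0 < p)
    (ha : g false = rep s) (hb : g true = enc γ₁ p α γ₂) (A k : ℕ) (hk : 0 < k) (c : ℕ → ℕ) (B : ℕ) :
    applyG g (enc A k c B)
      = enc (s * A + γ₁) (p * k) (Phi s (γ₁ + γ₂) p α c) (s * B + γ₂) := by
  rw [enc, applyG_append, applyG_append, applyG_rep g s ha, applyG_rep g s ha,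
    applyG_bw g s γ₁ p α γ₂ hp ha hb k hk]
  rw [enc, enc, rep_add, add_comm (s * B), rep_add]
  simp only [List.append_assoc]

lemma An_enc (s γ A n : ℕ) : s ^ (n + 1) * A + An s γ (n + 1) = s * (s ^ n * A + An s γ n) + γ := by
  simp only [An]; ring

lemma iter_enc (g : Bool → Word) (s γ₁ p : ℕ) (α : ℕ → ℕ) (γ₂ : ℕ) (hp : 0 < p)
    (ha : g false = rep s) (hb : g true = enc γ₁ p α γ₂) (A k : ℕ) (hk : 0 < k) (c : ℕ → ℕ) (B : ℕ)
    (n : ℕ) :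
    (applyG g)^[n] (enc A k c B)
      = enc (s ^ n * A + An s γ₁ n) (p ^ n * k) ((Phi s (γ₁ + γ₂) p α)^[n] c)
        (s ^ n * B + An s γ₂ n) := by
  induction n with
  | zero => simp [An]
  | succ n ih =>
    rw [Function.iterate_succ_apply', ih,
      applyG_enc g s γ₁ p α γ₂ hp ha hb _ _ (Nat.mul_pos (Nat.pow_pos hp) hk),
      Function.iterate_succ_apply', An_enc, An_enc, pow_succ', mul_assoc]

lemma iter_rep (g : Bool → Word) (s : ℕ) (ha : g false = rep s) (n k : ℕ) :
    (applyG g)^[n] (rep k) = rep (s ^ n * k) := by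
  induction n with
  | zero => simp
  | succ n ih => rw [Function.iterate_succ_apply', ih, applyG_rep g s ha, pow_succ', mul_assoc]

lemma true_eq (c : ℕ → ℕ) : [true] = enc 0 1 c 0 := by simp [enc, bw_one, rep]

lemma iter_true (g : Bool → Word) (s γ₁ p : ℕ) (α : ℕ → ℕ) (γ₂ : ℕ) (hp : 0 < p)
    (ha : g false = rep s) (hb : g true = enc γ₁ p α γ₂) (c : ℕ → ℕ) (n : ℕ) :
    (applyG g)^[n] [true] = enc (An s γ₁ n) (p ^ n) ((Phi s (γ₁ + γ₂) p α)^[n] c) (An s γ₂ n) := by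
  rw [true_eq c, iter_enc g s γ₁ p α γ₂ hp ha hb _ _ one_pos]
  simp

def IsHom (f : Word → Word) : Prop := f [] = [] ∧ ∀ u v, f (u ++ v) = f u ++ f v

lemma IsHom.app (g : Bool → Word) : IsHom (applyG g) := ⟨rfl, applyG_append g⟩

lemma IsHom.cmp {f g : Word → Word} (hf : IsHom f) (hg : IsHom g) : IsHom (f ∘ g) :=
  ⟨by simp [hg.1, hf.1], fun u v => by simp [hg.2, hf.2]⟩

lemma IsHom.iter {f : Word → Word} (hf : IsHom f) (n : ℕ) : IsHom f^[n] := by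
  induction n with
  | zero => exact ⟨rfl, fun _ _ => rfl⟩
  | succ n ih => rw [Function.iterate_succ']; exact hf.cmp ih

lemma IsHom.ext' {f g : Word → Word} (hf : IsHom f) (hg : IsHom g) (ha : f [false] = g [false])
    (hb : f [true] = g [true]) : f = g := by
  funext w
  induction w with
  | nil => rw [hf.1, hg.1]
  | cons x w ih =>
    have e : x :: w = [x] ++ w := rfl
    rw [e, hf.2, hg.2, ih]
    cases x
    · rw [ha]
    · rw [hb]

lemma no_false (g : Bool → Word) (hb : true ∈ g true) (n : ℕ) (hn : 0 < n)
    (h : false ∉ (applyG g)^[n] [true]) : ∃ k : ℕ, g true = List.replicate k true := by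
  have ht : ∀ n, true ∈ (applyG g)^[n] [true] := by
    intro n
    induction n with
    | zero => simp
    | succ n ih =>
      rw [Function.iterate_succ_apply']
      exact List.mem_flatMap.mpr ⟨true, ih, hb⟩
  obtain ⟨l, rfl⟩ : ∃ l, n = l + 1 := ⟨n - 1, by omega⟩
  have hf : false ∉ g true := by
    intro hf
    apply h
    rw [Function.iterate_succ_apply']
    exact List.mem_flatMap.mpr ⟨true, ht l, hf⟩
  refine ⟨(g true).length, List.eq_replicate_iff.mpr ⟨rfl, ?_⟩⟩
  intro x hx
  cases x
  · exact absurd hx hf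
  · rfl

lemma enc_no_false (k : ℕ) (c : ℕ → ℕ) (h : ∀ j, 0 < j → j < k → c j = 0) :
    false ∉ enc 0 k c 0 := by
  rw [enc, bw_congr k c (fun _ => 0) h]
  simp [blockWord, rep]

lemma true_mem_enc (A k : ℕ) (c : ℕ → ℕ) (B : ℕ) : true ∈ enc A k c B := by
  simp [enc, blockWord]

lemma pow_eq_b (A k : ℕ) (hk : 0 < k) (c : ℕ → ℕ) (B l : ℕ) (h : enc A k c B = List.replicate l true) :
    A = 0 ∧ B = 0 ∧ ∀ j, 0 < j → j < k → c j = 0 := by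
  have hf : false ∉ enc A k c B := by rw [h]; simp
  simp only [enc, rep, blockWord, List.mem_append, not_or, List.mem_replicate, List.mem_flatMap,
    List.mem_cons] at hf
  obtain ⟨⟨hA, hc, -⟩, hB⟩ := hf
  refine ⟨by simpa using hA, by simpa using hB, ?_⟩
  intro j h0 hj
  by_contra hne
  apply hc
  refine ⟨j - 1, List.mem_range.mpr (by omega), Or.inr ?_⟩
  rw [show j - 1 + 1 = j by omega]
  exact ⟨hne, trivial⟩

lemma arith1 (S T A A' B B' c : ℕ) (hS : 1 ≤ S) (hT : 1 ≤ T) (hne : S ≠ T)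
    (hA : S * A' + A = T * A + A') (hB : S * B' + B = T * B + B')
    (hc : A + B + S * c = A' + B' + T * c) : c = 0 ∧ A = 0 ∧ B = 0 ∧ A' = 0 ∧ B' = 0 := by
  zify at *
  have hd : (S : ℤ) - T ≠ 0 := sub_ne_zero.mpr hne
  have e1 : ((S : ℤ) - 1) * c + (A + B) = 0 := by
    apply (mul_eq_zero.mp (?_ : ((S : ℤ) - T) * (((S : ℤ) - 1) * c + (A + B)) = 0)).resolve_left hd
    linear_combination hA + hB + ((S : ℤ) - 1) * hc
  have e2 : ((T : ℤ) - 1) * c + (A' + B') = 0 := by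
    apply (mul_eq_zero.mp (?_ : ((S : ℤ) - T) * (((T : ℤ) - 1) * c + (A' + B')) = 0)).resolve_left hd
    linear_combination hA + hB + ((T : ℤ) - 1) * hc
  have p1 : 0 ≤ ((S : ℤ) - 1) * c := mul_nonneg (by linarith) (by positivity)
  have p2 : 0 ≤ ((T : ℤ) - 1) * c := mul_nonneg (by linarith) (by positivity)
  have a1 : (0:ℤ) ≤ A := by positivity
  have a2 : (0:ℤ) ≤ B := by positivity
  have a3 : (0:ℤ) ≤ A' := by positivity
  have a4 : (0:ℤ) ≤ B' := by positivity
  refine ⟨?_, by linarith, by linarith, by linarith, by linarith⟩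
  apply (mul_eq_zero.mp (?_ : ((S : ℤ) - T) * c = 0)).resolve_left hd
  linarith

lemma arith2 (s t n m γ δ : ℕ) (hs : 1 ≤ s) (ht : 1 ≤ t) (hn : 0 < n) (hm : 0 < m)
    (h : s ^ n = t ^ m) (hA : An s γ n = An t δ m) : s * δ + γ = t * γ + δ := by
  by_cases h1 : s ^ n = 1
  · have e1 : s = 1 := (Nat.pow_eq_one.mp h1).resolve_right (by omega)
    have e2 : t = 1 := (Nat.pow_eq_one.mp (h ▸ h1)).resolve_right (by omega)
    subst e1 e2; ring
  · have c1 := An_closed s γ n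
    have c2 := An_closed t δ m
    rw [← hA] at c2
    zify at h h1 ⊢
    rw [← h] at c2
    have hd : (s : ℤ) ^ n - 1 ≠ 0 := sub_ne_zero.mpr h1
    have : ((s : ℤ) ^ n - 1) * ((s * δ + γ) - (t * γ + δ)) = 0 := by
      linear_combination ((t : ℤ) - 1) * c1 - ((s : ℤ) - 1) * c2
    have := (mul_eq_zero.mp this).resolve_left hd
    linarith

/-- if `p = r^m`, `q = r^n` then `g₁g₂ = g₂g₁` iff `g₁^n = g₂^m`, or both
`g₁(b)`, `g₂(b)` are powers of `b`, or `g₁(a)=g₂(a)=a` and `g₁^n(b)`, `g₂^m(b)` are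
`a`-conjugates. -/
theorem stmt13 (s t : ℕ) (hs : 1 ≤ s) (ht : 1 ≤ t)
    (p q : ℕ) (hp : 2 ≤ p) (hq : 2 ≤ q)
    (γ₁ γ₂ δ₁ δ₂ : ℕ) (α β : ℕ → ℕ)
    (g₁ g₂ : Bool → Word)
    (h₁a : g₁ false = rep s)
    (h₁b : g₁ true = rep γ₁ ++ blockWord p α ++ rep γ₂)
    (h₂a : g₂ false = rep t)
    (h₂b : g₂ true = rep δ₁ ++ blockWord q β ++ rep δ₂)
    (m n r : ℕ) (hm : 0 < m) (hn : 0 < n) (hr : 0 < r)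
    (hpr : p = r ^ m) (hqr : q = r ^ n) :
    applyG g₁ ∘ applyG g₂ = applyG g₂ ∘ applyG g₁ ↔
      ((applyG g₁)^[n] = (applyG g₂)^[m]) ∨
      ((∃ k : ℕ, g₁ true = List.replicate k true) ∧
        (∃ k : ℕ, g₂ true = List.replicate k true)) ∨
      (g₁ false = [false] ∧ g₂ false = [false] ∧
        AConj ((applyG g₁)^[n] [true]) ((applyG g₂)^[m] [true])) := by
  have hp0 : 0 < p := by omega
  have hq0 : 0 < q := by omega
  have h₁b' : g₁ true = enc γ₁ p α γ₂ := h₁b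
  have h₂b' : g₂ true = enc δ₁ q β δ₂ := h₂b
  have hK : p ^ n = q ^ m := by rw [hpr, hqr, ← pow_mul, ← pow_mul, mul_comm]
  have hK2 : 2 ≤ p ^ n := le_trans hp (Nat.le_self_pow (by omega) p)
  set c0 : ℕ → ℕ := fun _ => 0 with hc0
  have T1 := iter_true g₁ s γ₁ p α γ₂ hp0 h₁a h₁b' c0 n
  have T2 := iter_true g₂ t δ₁ q β δ₂ hq0 h₂a h₂b' c0 m
  rw [← hK] at T2
  have I1 := fun x => Phi_iter s (γ₁ + γ₂) p hp0 α c0 x n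
  have I2 := fun x => Phi_iter t (δ₁ + δ₂) q hq0 β c0 x m
  rw [← hK] at I2
  have L1 : (applyG g₁)^[n] [false] = rep (s ^ n) := by
    simpa [rep] using iter_rep g₁ s h₁a n 1
  have L2 : (applyG g₂)^[m] [false] = rep (t ^ m) := by
    simpa [rep] using iter_rep g₂ t h₂a m 1
  have hS : 1 ≤ s ^ n := Nat.one_le_pow _ _ hs
  have hT : 1 ≤ t ^ m := Nat.one_le_pow _ _ ht
  set C1 := (Phi s (γ₁ + γ₂) p α)^[n] c0 with hC1
  set C2 := (Phi t (δ₁ + δ₂) q β)^[m] c0 with hC2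
  have back : s * δ₁ + γ₁ = t * γ₁ + δ₁ → s * δ₂ + γ₂ = t * γ₂ + δ₂ →
      (∀ j, 0 < j → j < p * q → Phi s (γ₁ + γ₂) p α β j = Phi t (δ₁ + δ₂) q β α j) →
      applyG g₁ ∘ applyG g₂ = applyG g₂ ∘ applyG g₁ := by
    intro e1 e2 e3
    apply ((IsHom.app g₁).cmp (IsHom.app g₂)).ext' ((IsHom.app g₂).cmp (IsHom.app g₁))
    · have a1 : applyG g₁ [false] = rep s := by simp [applyG, h₁a]
      have a2 : applyG g₂ [false] = rep t := by simp [applyG, h₂a]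
      simp only [Function.comp, a1, a2]
      rw [applyG_rep g₁ s h₁a, applyG_rep g₂ t h₂a, mul_comm]
    · have a1 : applyG g₁ [true] = enc γ₁ p α γ₂ := by simp [applyG, h₁b']
      have a2 : applyG g₂ [true] = enc δ₁ q β δ₂ := by simp [applyG, h₂b']
      simp only [Function.comp, a1, a2]
      rw [applyG_enc g₁ s γ₁ p α γ₂ hp0 h₁a h₁b' _ _ hq0,
        applyG_enc g₂ t δ₁ q β δ₂ hq0 h₂a h₂b' _ _ hp0, e1, e2, mul_comm q p]
      simp only [enc]
      rw [bw_congr _ _ _ e3]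
  have back2 : s ^ n = t ^ m → An s (γ₁ + γ₂) n = An t (δ₁ + δ₂) m →
      (∀ j, 0 < j → j < p ^ n → C1 j = C2 j) →
      ∀ j, 0 < j → j < p * q → Phi s (γ₁ + γ₂) p α β j = Phi t (δ₁ + δ₂) q β α j := by
    intro e1 e2 e3
    apply Phi_main s _ p t _ q hp hq α β m n hn
    funext x
    rw [I1, I2, e1, e2]
    exact Phi_congr _ _ _ (by omega) _ _ _ e3
  constructor
  · intro hcomm
    have hc : Function.Commute (applyG g₁) (applyG g₂) := fun w => congrFun hcomm w
    have hG := ((hc.iterate_left n).iterate_right m).eq [true]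
    rw [T1, T2, iter_enc g₁ s γ₁ p α γ₂ hp0 h₁a h₁b' _ _ (by omega),
      iter_enc g₂ t δ₁ q β δ₂ hq0 h₂a h₂b' _ _ (by omega), ← hK] at hG
    obtain ⟨hA, hB, hC⟩ := enc_inj _ _ _ _ _ _ _ hG
    rw [I1, I2] at hC
    have hCC : ∀ j, 0 < j → j < p ^ n → C1 j = C2 j := by
      intro j h0 hj
      have := hC j h0 (lt_of_lt_of_le hj (Nat.le_mul_of_pos_left _ (by omega)))
      rwa [Phi_small _ _ _ _ _ _ h0 hj, Phi_small _ _ _ _ _ _ h0 hj] at this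
    have hD : ∀ i, 0 < i → i < p ^ n → An s γ₁ n + An s γ₂ n + s ^ n * C1 i
        = An t δ₁ m + An t δ₂ m + t ^ m * C1 i := by
      intro i h0 hi
      have hKp : 0 < p ^ n := by omega
      have := hC (p ^ n * i) (Nat.mul_pos hKp h0) (Nat.mul_lt_mul_of_pos_left hi hKp)
      simp only [Phi, dvd_mul_right, if_true, Nat.mul_div_cancel_left _ hKp] at this
      rw [An_add, An_add, ← this, hCC i h0 hi]
    by_cases hST : s ^ n = t ^ m
    · by_cases h1 : s ^ n = 1
      · right; right
        have e1 : s = 1 := (Nat.pow_eq_one.mp h1).resolve_right (by omega)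
        have e2 : t = 1 := (Nat.pow_eq_one.mp (hST ▸ h1)).resolve_right (by omega)
        refine ⟨by rw [h₁a, e1]; rfl, by rw [h₂a, e2]; rfl, ?_⟩
        refine ⟨_, _, An t δ₁ m, An t δ₂ m, blockWord (p ^ n) C1, T1, ?_, ?_⟩
        · rw [T2, enc, bw_congr _ _ _ hCC]
        · have := hD 1 one_pos (by omega)
          rw [hST] at this
          omega
      · left
        have canc : ∀ x y : ℕ, s ^ n * x + y = t ^ m * y + x → x = y := by
          intro x y h
          rw [← hST] at h
          have hd : (s ^ n : ℤ) - 1 ≠ 0 := sub_ne_zero.mpr (by exact_mod_cast h1)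
          zify at h ⊢
          have := (mul_eq_zero.mp (by linear_combination h :
            ((s ^ n : ℤ) - 1) * ((x : ℤ) - y) = 0)).resolve_left hd
          linarith
        apply ((IsHom.app g₁).iter n).ext' ((IsHom.app g₂).iter m)
        · rw [L1, L2, hST]
        · rw [T1, T2, canc _ _ hA, canc _ _ hB]
          simp only [enc]
          rw [bw_congr _ _ _ hCC]
    · right; left
      have ar := fun i h0 hi => arith1 _ _ _ _ _ _ _ hS hT hST hA hB (hD i h0 hi)
      obtain ⟨-, z1, z2, z3, z4⟩ := ar 1 one_pos (by omega)
      constructor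
      · apply no_false g₁ (by rw [h₁b']; exact true_mem_enc _ _ _ _) n hn
        rw [T1, z1, z2]
        exact enc_no_false _ _ fun j h0 hj => (ar j h0 hj).1
      · apply no_false g₂ (by rw [h₂b']; exact true_mem_enc _ _ _ _) m hm
        rw [T2, z3, z4]
        exact enc_no_false _ _ fun j h0 hj => by rw [← hCC j h0 hj]; exact (ar j h0 hj).1
  · rintro (h | ⟨⟨k, h1⟩, ⟨l, h2⟩⟩ | ⟨h1, h2, h3⟩)
    · have hb := congrFun h [true]
      have ha := congrFun h [false]
      rw [L1, L2] at ha
      have ha' : s ^ n = t ^ m := by simpa [rep] using congrArg List.length ha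
      rw [T1, T2] at hb
      obtain ⟨hA, hB, hC⟩ := enc_inj _ _ _ _ _ _ _ hb
      apply back (arith2 s t n m _ _ hs ht hn hm ha' hA) (arith2 s t n m _ _ hs ht hn hm ha' hB)
      exact back2 ha' (by rw [← An_add, ← An_add, hA, hB]) hC
    · rw [h₁b'] at h1
      rw [h₂b'] at h2
      obtain ⟨a1, a2, a3⟩ := pow_eq_b _ _ hp0 _ _ _ h1
      obtain ⟨b1, b2, b3⟩ := pow_eq_b _ _ hq0 _ _ _ h2
      have aux : ∀ (s p k : ℕ) (x y : ℕ → ℕ), 0 < p → (∀ j, 0 < j → j < p → x j = 0) →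
          (∀ j, 0 < j → j < k → y j = 0) → ∀ j, 0 < j → j < p * k → Phi s 0 p x y j = 0 := by
        intro s p k x y hp hx hy j h0 hj
        rw [Phi_local s 0 p k hp x y (fun _ => 0) hy j h0 hj,
          Phi_congr s 0 p hp x (fun _ => 0) _ hx]
        simp [Phi]
      subst a1 a2 b1 b2
      apply back (by simp) (by simp)
      intro j h0 hj
      rw [aux s p q α β hp0 a3 b3 j h0 hj, aux t q p β α hq0 b3 a3 j h0 (by rwa [mul_comm])]
    · have e1 : s = 1 := by
        rw [h₁a] at h1; simpa [rep] using congrArg List.length h1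
      have e2 : t = 1 := by
        rw [h₂a] at h2; simpa [rep] using congrArg List.length h2
      obtain ⟨x, y, z, v, w, hu, hv, hxy⟩ := h3
      have hb : blockWord (p ^ n) C1 = blockWord (p ^ n) C2 := by
        rw [← trim_enc (An s γ₁ n) _ _ (An s γ₂ n), ← T1, hu, trim_rep,
          ← trim_enc (An t δ₁ m) _ _ (An t δ₂ m), ← T2, hv, trim_rep]
      have hl : An s γ₁ n + An s γ₂ n = An t δ₁ m + An t δ₂ m := by
        have l1 := congrArg List.length hu
        have l2 := congrArg List.length hv
        rw [T1] at l1
        rw [T2] at l2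
        simp only [enc, hb, rep, List.length_append, List.length_replicate] at l1 l2
        omega
      apply back (by rw [e1, e2]; ring) (by rw [e1, e2]; ring)
      exact back2 (by rw [e1, e2]; simp) (by rw [← An_add, ← An_add, hl]) (bw_inj _ _ _ hb)
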